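/- There exists ε₀ ∈ (0,1) such that for every ε ∈ (0, ε₀] there exist a real λ₀ ≥ 1 and a natural number n₀ with the following property: for every n ≥ n₀, every m ≥ 1, every real λ with λ₀ ≤ λ and m²·λ ≤ ε·n, every integer l with m²·λ/ε < l ≤ n, and every nonempty family U of m-element subsets of [n], there exist a set g ⊆ [n] with |g| ≤ κ(U) / ln( ε·l/(m²·λ) ) and a family Y of l-element subsets of [n] with |Y| ≥ C(n, l)·(1 − e^{−λ}) such that for every y ∈ Y there exists s ∈ U with g ⊆ s ⊆ g ∪ y. -/

import Mathlib

/-- The sparsity `κ(U) = ln C(n,m) − ln |U|` of a family of `m`-subsets of `[n]`. -/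
noncomputable def sparsity (n m : ℕ) (U : Finset (Finset ℕ)) : ℝ :=
  Real.log (n.choose m) - Real.log U.card

/-!
Put `β = b * m / n` with `b = ε * l / (m ^ 2 * λ)`, and let `g` maximise
`#{s ∈ U | g ⊆ s} / β ^ #g`. Comparison with `g = ∅` bounds `#g`, and maximality makes the link of
`g` a `β`-spread family.

A random set of about `l / λ` elements fails to contain a member of a spread family with
probability at most `4 * ε`, by Cauchy-Schwarz (the second moment method). The probability that a
random `r`-set contains no member is submultiplicative in `r`, so for a random `l`-set, which is
worth about `λ` such blocks, it is at most `exp (-λ)`.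
-/

section

open Finset

/-- The probability that a fixed `t`-subset of an `n`-element set is contained in a uniformly
random `q`-subset. -/
noncomputable def inclusionProb (n q t : ℕ) : ℝ := q.choose t / n.choose t

lemma inclusionProb_nonneg (n q t : ℕ) : 0 ≤ inclusionProb n q t := by
  unfold inclusionProb; positivity

lemma inclusionProb_pos {n q t : ℕ} (htq : t ≤ q) (hqn : q ≤ n) : 0 < inclusionProb n q t :=
  div_pos (mod_cast Nat.choose_pos htq) (mod_cast Nat.choose_pos (htq.trans hqn))

lemma inclusionProb_of_lt {n q t : ℕ} (h : q < t) : inclusionProb n q t = 0 := by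
  simp [inclusionProb, Nat.choose_eq_zero_of_lt h]

@[simp]
lemma inclusionProb_zero (n q : ℕ) : inclusionProb n q 0 = 1 := by simp [inclusionProb]

@[simp]
lemma inclusionProb_one (n q : ℕ) : inclusionProb n q 1 = q / n := by simp [inclusionProb]

lemma inclusionProb_succ (n q t : ℕ) :
    inclusionProb n q (t + 1) = inclusionProb n q t * ((q - t : ℕ) / (n - t : ℕ)) := by
  have choose_succ (k : ℕ) : (k.choose (t + 1) : ℝ) = k.choose t * (k - t : ℕ) / (t + 1) := by
    rw [eq_div_iff (by positivity)]
    exact_mod_cast Nat.choose_succ_right_eq k t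
  simp only [inclusionProb, choose_succ]
  rw [div_div_div_cancel_right₀ (by positivity), mul_div_mul_comm]

lemma sub_div_sub_antitone {n q : ℕ} (hqn : q ≤ n) :
    Antitone fun i : ℕ => ((q - i : ℕ) : ℝ) / (n - i : ℕ) := by
  intro i j hij
  rcases le_or_gt q j with hqj | hjq
  · simp only [Nat.sub_eq_zero_of_le hqj, Nat.cast_zero, zero_div]
    positivity
  · have hpos : ∀ k ≤ j, (0 : ℝ) < (n - k : ℕ) := fun k hk => mod_cast by omega
    rw [div_le_div_iff₀ (hpos j le_rfl) (hpos i hij)]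
    norm_cast
    zify [hjq.le, hij.trans hjq.le, hjq.le.trans hqn, hij.trans (hjq.le.trans hqn)]
    have : (0 : ℤ) ≤ (n - q) * (j - i) := mul_nonneg (by omega) (by omega)
    linarith

lemma inclusionProb_add_le {n q : ℕ} (hqn : q ≤ n) (s t : ℕ) :
    inclusionProb n q (s + t) ≤ inclusionProb n q s * inclusionProb n q t := by
  induction t with
  | zero => simp
  | succ t ih =>
    rw [← add_assoc, inclusionProb_succ, inclusionProb_succ, ← mul_assoc]
    exact mul_le_mul ih (sub_div_sub_antitone hqn (Nat.le_add_left t s)) (by positivity)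
      (mul_nonneg (inclusionProb_nonneg ..) (inclusionProb_nonneg ..))

lemma inclusionProb_le_pow {n q : ℕ} (hqn : q ≤ n) (t : ℕ) :
    inclusionProb n q t ≤ (q / n : ℝ) ^ t := by
  induction t with
  | zero => simp
  | succ t ih =>
    calc inclusionProb n q (t + 1) ≤ inclusionProb n q t * (q / n) := by
          simpa using inclusionProb_add_le hqn t 1
      _ ≤ (q / n) ^ (t + 1) := by rw [pow_succ]; gcongr

lemma inclusionProb_mul_pow_le {n q k : ℕ} (hqn : q ≤ n) {s t : ℕ} (hst : s + t ≤ k) :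
    inclusionProb n q s * ((q - k : ℕ) / n : ℝ) ^ t ≤ inclusionProb n q (s + t) := by
  induction t with
  | zero => simp
  | succ t ih =>
    have factor_le : ((q - k : ℕ) / n : ℝ) ≤ (q - (s + t) : ℕ) / (n - (s + t) : ℕ) := by
      rcases Nat.eq_zero_or_pos (n - (s + t)) with h | h
      · simp [show q - k = 0 by omega, h]
      · gcongr <;> omega
    rw [← add_assoc, inclusionProb_succ, pow_succ, ← mul_assoc]
    exact mul_le_mul (ih (by omega)) factor_le (by positivity) (inclusionProb_nonneg ..)

lemma inclusionProb_union_mul_pow_le {n q k t : ℕ} (hqn : q ≤ n) (htk : t ≤ k) :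
    inclusionProb n q (k + (k - t)) * ((q - k : ℕ) / n : ℝ) ^ t ≤ inclusionProb n q k ^ 2 :=
  calc inclusionProb n q (k + (k - t)) * ((q - k : ℕ) / n : ℝ) ^ t
      ≤ inclusionProb n q k * inclusionProb n q (k - t) * ((q - k : ℕ) / n : ℝ) ^ t := by
        gcongr; exact inclusionProb_add_le hqn k (k - t)
    _ = inclusionProb n q k * (inclusionProb n q (k - t) * ((q - k : ℕ) / n : ℝ) ^ t) :=
        mul_assoc ..
    _ ≤ inclusionProb n q k * inclusionProb n q (k - t + t) := by
        gcongr
        · exact inclusionProb_nonneg ..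
        · exact inclusionProb_mul_pow_le hqn (by omega)
    _ = inclusionProb n q k ^ 2 := by rw [Nat.sub_add_cancel htk, sq]

lemma card_powersetCard_filter_superset {α : Type*} [DecidableEq α] {E T : Finset α} (hTE : T ⊆ E)
    (q : ℕ) :
    (#{y ∈ E.powersetCard q | T ⊆ y} : ℝ) = (#E).choose q * inclusionProb #E q #T := by
  rcases le_or_gt #T q with hTq | hqT
  · rw [card_filter_powersetCard_subset _ _ _ hTE hTq, inclusionProb, ← mul_div_assoc,
      eq_div_iff (mod_cast (Nat.choose_pos (card_le_card hTE)).ne'), mul_comm]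
    exact_mod_cast (Nat.choose_mul hTq).symm
  · rw [inclusionProb_of_lt hqT, mul_zero, Nat.cast_eq_zero, card_eq_zero, filter_eq_empty_iff]
    intro y hy hTy
    exact (card_le_card hTy).not_gt ((mem_powersetCard.1 hy).2 ▸ hqT)

/-- The proportion of the `r`-element subsets of `E` that satisfy `p`; it is `0` if `#E < r`. -/
noncomputable def sliceDensity {α : Type*} (E : Finset α) (p : Finset α → Prop) [DecidablePred p]
    (r : ℕ) : ℝ :=
  #{y ∈ E.powersetCard r | p y} / (#E).choose r

section SliceDensity

variable {α : Type*} {E : Finset α} {p : Finset α → Prop} [DecidablePred p]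

lemma sliceDensity_nonneg (r : ℕ) : 0 ≤ sliceDensity E p r := by
  unfold sliceDensity; positivity

lemma card_filter_powersetCard (r : ℕ) :
    (#{y ∈ E.powersetCard r | p y} : ℝ) = (#E).choose r * sliceDensity E p r := by
  rcases le_or_gt r #E with hr | hr
  · rw [sliceDensity, mul_div_cancel₀]
    exact mod_cast (Nat.choose_pos hr).ne'
  · simp [powersetCard_eq_empty.2 hr, Nat.choose_eq_zero_of_lt hr]

lemma sliceDensity_le_one (r : ℕ) : sliceDensity E p r ≤ 1 := by
  refine div_le_one_of_le₀ ?_ (by positivity)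
  exact_mod_cast (card_filter_le _ p).trans_eq (card_powersetCard r E)

lemma card_filter_not_powersetCard (r : ℕ) :
    (#{y ∈ E.powersetCard r | ¬ p y} : ℝ) = (#E).choose r * (1 - sliceDensity E p r) := by
  have h := card_filter_add_card_filter_not (s := E.powersetCard r) p
  rw [card_powersetCard] at h
  rw [mul_sub, mul_one, ← card_filter_powersetCard, eq_sub_iff_add_eq']
  exact_mod_cast h

lemma sliceDensity_antitone (hp : Antitone p) : Antitone (sliceDensity E p) := by
  classical
  intro s t hst
  rcases le_or_gt t #E with ht | ht
  swap
  · rw [sliceDensity, powersetCard_eq_empty.2 ht]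
    simpa using sliceDensity_nonneg s
  have double_count : #{y ∈ E.powersetCard t | p y} * t.choose s
      ≤ #{x ∈ E.powersetCard s | p x} * (#E - s).choose (t - s) := by
    refine card_mul_le_card_mul (fun y x => x ⊆ y) (fun y hy => ?_) (fun x hx => ?_)
    · obtain ⟨⟨hyE, hyt⟩, hpy⟩ := by simpa only [mem_filter, mem_powersetCard] using hy
      rw [← hyt, ← card_powersetCard]
      refine card_le_card fun x hx => ?_
      obtain ⟨hxy, hxs⟩ := mem_powersetCard.1 hx
      simpa only [bipartiteAbove, mem_filter, mem_powersetCard]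
        using ⟨⟨⟨hxy.trans hyE, hxs⟩, hp hxy hpy⟩, hxy⟩
    · obtain ⟨hxE, hxs⟩ := mem_powersetCard.1 (mem_filter.1 hx).1
      rw [← hxs, ← card_filter_powersetCard_subset x E t hxE (hxs ▸ hst)]
      exact card_le_card (filter_subset_filter _ (filter_subset _ _))
  have choose_pos : ∀ r ≤ #E, (0 : ℝ) < (#E).choose r := fun r hr => mod_cast Nat.choose_pos hr
  rw [sliceDensity, sliceDensity, div_le_div_iff₀ (choose_pos t ht) (choose_pos s (hst.trans ht))]
  norm_cast
  refine Nat.le_of_mul_le_mul_right ?_ (Nat.choose_pos hst)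
  calc _ = #{y ∈ E.powersetCard t | p y} * t.choose s * (#E).choose s := by ring
    _ ≤ #{x ∈ E.powersetCard s | p x} * (#E - s).choose (t - s) * (#E).choose s := by gcongr
    _ = _ := by rw [mul_assoc, mul_assoc, Nat.choose_mul hst]; ring

end SliceDensity

/-- `y` contains no member of `V`: the failure event of the second moment argument. -/
def Avoids {α : Type*} (V : Finset (Finset α)) (y : Finset α) : Prop := ∀ s ∈ V, ¬ s ⊆ y

lemma avoids_antitone {α : Type*} (V : Finset (Finset α)) : Antitone (Avoids V) :=
  fun _ _ hxy hy s hs hsx => hy s hs (hsx.trans hxy)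

instance {α : Type*} [DecidableEq α] (V : Finset (Finset α)) : DecidablePred (Avoids V) :=
  fun y => inferInstanceAs (Decidable (∀ s ∈ V, ¬ s ⊆ y))

section PairsUnion

variable {α : Type*} [DecidableEq α]

-- The count depends on `S` only through `#S`: given its size, the union of two independent
-- uniformly random sets is uniform.
lemma card_pairs_union_eq (S : Finset α) (a b : ℕ) :
    (#{x ∈ S.powersetCard a ×ˢ S.powersetCard b | x.1 ∪ x.2 = S} : ℝ)
      = (#S).choose a * ((#S).choose b * inclusionProb #S b (#S - a)) := by
  have fibre : ∀ A ∈ S.powersetCard a, (#{B ∈ S.powersetCard b | A ∪ B = S} : ℝ)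
      = (#S).choose b * inclusionProb #S b (#S - a) := by
    intro A hA
    obtain ⟨hAS, hAa⟩ := mem_powersetCard.1 hA
    rw [← hAa, ← card_sdiff_of_subset hAS, ← card_powersetCard_filter_superset sdiff_subset]
    congr 2
    refine filter_congr fun B hB => ?_
    have := (mem_powersetCard.1 hB).1
    grind
  rw [card_filter, sum_product]
  simp only [← card_filter, Nat.cast_sum]
  rw [sum_congr rfl fibre, sum_const, card_powersetCard, nsmul_eq_mul]

lemma card_pairs_union (E : Finset α) (p : Finset α → Prop) [DecidablePred p] (a b : ℕ) :
    (#{x ∈ E.powersetCard a ×ˢ E.powersetCard b | p (x.1 ∪ x.2)} : ℝ)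
      = ∑ j ∈ range (#E + 1), j.choose a * (j.choose b * inclusionProb j b (j - a)) *
          #{S ∈ E.powersetCard j | p S} := by
  have mapsTo : Set.MapsTo (fun x : Finset α × Finset α => x.1 ∪ x.2)
      (E.powersetCard a ×ˢ E.powersetCard b |>.filter fun x => p (x.1 ∪ x.2))
      (E.powerset.filter p) := by
    intro x hx
    simp only [coe_filter, mem_product, mem_powersetCard, Set.mem_ofPred_eq, mem_powerset] at hx ⊢
    exact ⟨union_subset hx.1.1.1 hx.1.2.1, hx.2⟩
  have fibre : ∀ S ∈ E.powerset.filter p,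
      {x ∈ {x ∈ E.powersetCard a ×ˢ E.powersetCard b | p (x.1 ∪ x.2)} | x.1 ∪ x.2 = S}
        = {x ∈ S.powersetCard a ×ˢ S.powersetCard b | x.1 ∪ x.2 = S} := by
    intro S hS
    obtain ⟨hSE, hpS⟩ := by simpa only [mem_filter, mem_powerset] using hS
    ext ⟨A, B⟩
    simp only [mem_filter, mem_product, mem_powersetCard]
    grind
  rw [card_eq_sum_card_fiberwise mapsTo, sum_congr rfl fun S hS => congrArg card (fibre S hS),
    Nat.cast_sum, sum_filter, sum_powerset]
  refine sum_congr rfl fun j _ => ?_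
  rw [← sum_filter, mul_comm, ← nsmul_eq_mul, ← sum_const]
  refine sum_congr rfl fun S hS => ?_
  rw [card_pairs_union_eq, (mem_powersetCard.1 (mem_filter.1 hS).1).2]

lemma sliceDensity_add_mul_le_card_pairs {E : Finset α} {p : Finset α → Prop} [DecidablePred p]
    (hp : Antitone p) (a b : ℕ) :
    sliceDensity E p (a + b) * ((#E).choose a * (#E).choose b)
      ≤ #{x ∈ E.powersetCard a ×ˢ E.powersetCard b | p (x.1 ∪ x.2)} := by
  have total := card_pairs_union E (fun _ => True) a b
  simp only [filter_true, card_product, card_powersetCard, Nat.cast_mul] at total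
  rw [total, card_pairs_union, mul_sum]
  refine sum_le_sum fun j _ => ?_
  rcases le_or_gt j (a + b) with hj | hj
  · have weight_nonneg : 0 ≤ j.choose a * (j.choose b * inclusionProb j b (j - a)) :=
      mul_nonneg (by positivity) (mul_nonneg (by positivity) (inclusionProb_nonneg ..))
    rw [card_filter_powersetCard, mul_left_comm, mul_comm (sliceDensity E p (a + b))]
    gcongr
    exact sliceDensity_antitone hp hj
  · simp [inclusionProb_of_lt (show b < j - a by omega)]

end PairsUnion

section Submultiplicative

variable {α : Type*} {E : Finset α} {p : Finset α → Prop} [DecidablePred p]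

lemma sliceDensity_add_le (hp : Antitone p) (a b : ℕ) :
    sliceDensity E p (a + b) ≤ sliceDensity E p a * sliceDensity E p b := by
  classical
  rcases lt_or_ge #E (a + b) with hab | hab
  · rw [sliceDensity, Nat.choose_eq_zero_of_lt hab, Nat.cast_zero, div_zero]
    exact mul_nonneg (sliceDensity_nonneg a) (sliceDensity_nonneg b)
  have choose_pos : ∀ r ≤ #E, (0 : ℝ) < (#E).choose r := fun r hr => mod_cast Nat.choose_pos hr
  have ha := choose_pos a (by omega)
  have hb := choose_pos b (by omega)
  refine le_of_mul_le_mul_right ?_ (mul_pos ha hb)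
  calc sliceDensity E p (a + b) * ((#E).choose a * (#E).choose b)
      ≤ #{x ∈ E.powersetCard a ×ˢ E.powersetCard b | p (x.1 ∪ x.2)} :=
        sliceDensity_add_mul_le_card_pairs hp a b
    _ ≤ (#{x ∈ E.powersetCard a ×ˢ E.powersetCard b | p x.1 ∧ p x.2} : ℝ) := by
        gcongr with x
        exact fun h => ⟨hp subset_union_left h, hp subset_union_right h⟩
    _ = sliceDensity E p a * sliceDensity E p b * ((#E).choose a * (#E).choose b) := by
        rw [filter_product, card_product, Nat.cast_mul, card_filter_powersetCard,
          card_filter_powersetCard]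
        ring

lemma sliceDensity_mul_le_pow (hp : Antitone p) (K q : ℕ) :
    sliceDensity E p (K * q) ≤ sliceDensity E p q ^ K := by
  induction K with
  | zero => simpa using sliceDensity_le_one 0
  | succ K ih =>
    calc sliceDensity E p ((K + 1) * q) ≤ sliceDensity E p (K * q) * sliceDensity E p q := by
          rw [add_one_mul]; exact sliceDensity_add_le hp _ _
      _ ≤ sliceDensity E p q ^ (K + 1) := by
          rw [pow_succ]; exact mul_le_mul_of_nonneg_right ih (sliceDensity_nonneg q)

lemma sliceDensity_le_exp_neg (hp : Antitone p) {l K : ℕ}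
    (h : sliceDensity E p (l / K) ≤ Real.exp (-1)) :
    sliceDensity E p l ≤ Real.exp (-K) :=
  calc sliceDensity E p l ≤ sliceDensity E p (K * (l / K)) :=
        sliceDensity_antitone hp (Nat.mul_div_le l K)
    _ ≤ sliceDensity E p (l / K) ^ K := sliceDensity_mul_le_pow hp K _
    _ ≤ Real.exp (-1) ^ K := by gcongr; exact sliceDensity_nonneg _
    _ = Real.exp (-K) := by rw [← Real.exp_nat_mul, mul_neg_one]

end Submultiplicative

variable {α : Type*} [DecidableEq α]

/-- `V` is `β`-spread: every set `T` is contained in at most a proportion `β ^ #T` of the members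
of `V`. -/
def IsSpread (V : Finset (Finset α)) (β : ℝ) : Prop :=
  ∀ T : Finset α, (#{s ∈ V | T ⊆ s} : ℝ) ≤ #V * β ^ #T

/-- The link of `g` in `U`: the members of `U` that contain `g`, with `g` removed from each. -/
def link (U : Finset (Finset α)) (g : Finset α) : Finset (Finset α) :=
  {s ∈ U | g ⊆ s}.image (· \ g)

section Link

variable {U : Finset (Finset α)} {g : Finset α}

lemma mem_link {t : Finset α} : t ∈ link U g ↔ ∃ s ∈ U, g ⊆ s ∧ s \ g = t := by
  simp [link, and_assoc]

lemma link_subset_powersetCard {E : Finset α} {m : ℕ} (hU : U ⊆ E.powersetCard m) :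
    link U g ⊆ E.powersetCard (m - #g) := by
  intro t ht
  obtain ⟨s, hs, hgs, rfl⟩ := mem_link.1 ht
  obtain ⟨hsE, hsm⟩ := mem_powersetCard.1 (hU hs)
  exact mem_powersetCard.2 ⟨sdiff_subset.trans hsE, by rw [card_sdiff_of_subset hgs, hsm]⟩

lemma card_link (U : Finset (Finset α)) (g : Finset α) : #(link U g) = #{s ∈ U | g ⊆ s} := by
  refine card_image_of_injOn fun s hs t ht hst => ?_
  rw [← sdiff_union_of_subset (mem_filter.1 hs).2, ← sdiff_union_of_subset (mem_filter.1 ht).2]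
  exact congrArg (· ∪ g) hst

lemma card_filter_link_le (T : Finset α) :
    #{t ∈ link U g | T ⊆ t} ≤ #{s ∈ U | g ∪ T ⊆ s} := by
  refine (card_le_card fun t ht => ?_).trans (card_image_le (f := (· \ g)))
  obtain ⟨htU, hTt⟩ := mem_filter.1 ht
  obtain ⟨s, hs, hgs, rfl⟩ := mem_link.1 htU
  exact mem_image.2 ⟨s, mem_filter.2 ⟨hs, union_subset hgs (hTt.trans sdiff_subset)⟩, rfl⟩

lemma isSpread_link {β : ℝ} (hβ : 0 < β)
    (hg : ∀ T, (#{s ∈ U | T ⊆ s} : ℝ) * β ^ #g ≤ #{s ∈ U | g ⊆ s} * β ^ #T) :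
    IsSpread (link U g) β := by
  intro T
  by_cases hT : Disjoint g T
  · refine le_of_mul_le_mul_right ?_ (pow_pos hβ #g)
    calc (#{t ∈ link U g | T ⊆ t} : ℝ) * β ^ #g ≤ #{s ∈ U | g ∪ T ⊆ s} * β ^ #g := by
          gcongr ?_ * _; exact mod_cast card_filter_link_le T
      _ ≤ #{s ∈ U | g ⊆ s} * β ^ #(g ∪ T) := hg _
      _ = #(link U g) * β ^ #T * β ^ #g := by
          rw [card_link, card_union_of_disjoint hT, pow_add]; ring
  · have no_member : {t ∈ link U g | T ⊆ t} = ∅ := by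
      refine filter_eq_empty_iff.2 fun t ht hTt => hT ?_
      obtain ⟨s, -, -, rfl⟩ := mem_link.1 ht
      exact disjoint_sdiff.mono_right hTt
    rw [no_member, card_empty, Nat.cast_zero]
    positivity

end Link

lemma exists_forall_card_superset_mul_pow_le {U : Finset (Finset α)} {β : ℝ} (hβ : 0 < β) :
    ∃ g, ∀ T, (#{s ∈ U | T ⊆ s} : ℝ) * β ^ #g ≤ #{s ∈ U | g ⊆ s} * β ^ #T := by
  obtain ⟨g, -, hg⟩ := exists_max_image (insert ∅ (U.biUnion powerset))
    (fun T => (#{s ∈ U | T ⊆ s} : ℝ) / β ^ #T) (insert_nonempty _ _)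
  refine ⟨g, fun T => ?_⟩
  by_cases hT : ∃ s ∈ U, T ⊆ s
  · have := hg T (by simpa using Or.inr hT)
    rwa [div_le_div_iff₀ (by positivity) (by positivity)] at this
  · rw [filter_eq_empty_iff.2 fun s hs hTs => hT ⟨s, hs, hTs⟩]
    simp only [card_empty, Nat.cast_zero, zero_mul]
    positivity

lemma card_le_log_div_log {E g : Finset α} {U : Finset (Finset α)} {m : ℕ} {b : ℝ} (hb : 1 < b)
    (hm : 1 ≤ m) (hU : U.Nonempty) (hUE : U ⊆ E.powersetCard m) (hgE : g ⊆ E)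
    (hg : (#U : ℝ) * (b * m / #E) ^ #g ≤ #{s ∈ U | g ⊆ s}) :
    (#g : ℝ) ≤ (Real.log ((#E).choose m) - Real.log #U) / Real.log b := by
  have hmE : m ≤ #E := powersetCard_nonempty.1 (hU.mono hUE)
  have hE_pos : (0 : ℝ) < #E := mod_cast hm.trans hmE
  have : (0 : ℝ) < m := mod_cast hm
  have hU_pos : (0 : ℝ) < #U := mod_cast hU.card_pos
  have card_mul_pow_le : #U * b ^ #g ≤ (#E).choose m := by
    refine le_of_mul_le_mul_right ?_ (show 0 < (m / #E : ℝ) ^ #g by positivity)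
    calc #U * b ^ #g * (m / #E) ^ #g = #U * (b * m / #E) ^ #g := by
          rw [mul_assoc, ← mul_pow, mul_div_assoc]
      _ ≤ #{s ∈ U | g ⊆ s} := hg
      _ ≤ (#{s ∈ E.powersetCard m | g ⊆ s} : ℝ) := by gcongr
      _ = (#E).choose m * inclusionProb #E m #g := card_powersetCard_filter_superset hgE m
      _ ≤ (#E).choose m * (m / #E) ^ #g := by gcongr; exact inclusionProb_le_pow hmE _
  have log_le := Real.log_le_log (by positivity) card_mul_pow_le
  rw [Real.log_mul hU_pos.ne' (by positivity), Real.log_pow] at log_le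
  rw [le_div_iff₀ (Real.log_pos hb)]
  linarith

lemma exists_isSpread_link {E : Finset α} {U : Finset (Finset α)} {m : ℕ} {b : ℝ} (hb : 1 < b)
    (hm : 1 ≤ m) (hU : U.Nonempty) (hUE : U ⊆ E.powersetCard m) :
    ∃ g ⊆ E, (#g : ℝ) ≤ (Real.log ((#E).choose m) - Real.log #U) / Real.log b ∧
      (link U g).Nonempty ∧ IsSpread (link U g) (b * m / #E) := by
  have hE_pos : (0 : ℝ) < #E := mod_cast hm.trans (powersetCard_nonempty.1 (hU.mono hUE))
  have : (0 : ℝ) < #U := mod_cast hU.card_pos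
  have hβ : 0 < b * m / #E := by positivity
  obtain ⟨g, hg⟩ := exists_forall_card_superset_mul_pow_le (U := U) hβ
  have compare_empty : (#U : ℝ) * (b * m / #E) ^ #g ≤ #{s ∈ U | g ⊆ s} := by simpa using hg ∅
  have superset_nonempty : {s ∈ U | g ⊆ s}.Nonempty := by
    rw [← card_pos, ← Nat.cast_pos (α := ℝ)]
    exact lt_of_lt_of_le (by positivity) compare_empty
  obtain ⟨s, hs⟩ := superset_nonempty
  have hgE : g ⊆ E :=
    (mem_filter.1 hs).2.trans (mem_powersetCard.1 (hUE (mem_filter.1 hs).1)).1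
  exact ⟨g, hgE, card_le_log_div_log hb hm hU hUE hgE compare_empty, Nonempty.image ⟨s, hs⟩ _,
    isSpread_link hβ hg⟩

lemma exists_mem_of_not_avoids_link {U : Finset (Finset α)} {g y : Finset α}
    (h : ¬ Avoids (link U g) y) : ∃ s ∈ U, g ⊆ s ∧ s ⊆ g ∪ y := by
  simp only [Avoids, not_forall, not_not] at h
  obtain ⟨t, ht, hty⟩ := h
  obtain ⟨s, hs, hgs, rfl⟩ := mem_link.1 ht
  exact ⟨s, hs, hgs, sdiff_le_iff.1 hty⟩

section SecondMoment

variable {E : Finset α} {V : Finset (Finset α)} {k q : ℕ} {β c : ℝ}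

lemma IsSpread.sum_one_add_pow_card_inter_le (hV : IsSpread V β) (hc : 0 ≤ c) (s : Finset α) :
    ∑ s' ∈ V, (1 + c) ^ #(s ∩ s') ≤ #V * (1 + c * β) ^ #s := by
  have one_add_pow (a : ℝ) (A : Finset α) : (1 + a) ^ #A = ∑ T ∈ A.powerset, a ^ #T := by
    simpa [add_comm] using (sum_pow_mul_eq_add_pow a 1 A).symm
  calc ∑ s' ∈ V, (1 + c) ^ #(s ∩ s')
      = ∑ s' ∈ V, ∑ T ∈ s.powerset with T ⊆ s', c ^ #T := by
        refine sum_congr rfl fun s' _ => ?_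
        rw [one_add_pow]
        congr 1
        ext T
        simp only [mem_filter, mem_powerset, subset_inter_iff]
    _ = ∑ T ∈ s.powerset, #{s' ∈ V | T ⊆ s'} * c ^ #T := by
        simp only [sum_filter]
        rw [sum_comm]
        refine sum_congr rfl fun T _ => ?_
        rw [← sum_filter, sum_const, nsmul_eq_mul]
    _ ≤ ∑ T ∈ s.powerset, #V * β ^ #T * c ^ #T := by
        gcongr with T; exact hV T
    _ = #V * (1 + c * β) ^ #s := by
        rw [one_add_pow, mul_sum]
        exact sum_congr rfl fun T _ => by rw [mul_pow]; ring

lemma sum_card_filter_subset (hVE : V ⊆ E.powersetCard k) :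
    ∑ y ∈ E.powersetCard q, (#{s ∈ V | s ⊆ y} : ℝ)
      = #V * ((#E).choose q * inclusionProb #E q k) := by
  have count : ∀ s ∈ V, (#{y ∈ E.powersetCard q | s ⊆ y} : ℝ)
      = (#E).choose q * inclusionProb #E q k := by
    intro s hs
    obtain ⟨hsE, hsk⟩ := mem_powersetCard.1 (hVE hs)
    rw [card_powersetCard_filter_superset hsE, hsk]
  rw [← nsmul_eq_mul, ← sum_const, ← sum_congr rfl count]
  exact_mod_cast (sum_card_bipartiteAbove_eq_sum_card_bipartiteBelow
    fun s y : Finset α => s ⊆ y).symm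

lemma sum_card_filter_subset_sq (𝒴 V : Finset (Finset α)) :
    ∑ y ∈ 𝒴, (#{s ∈ V | s ⊆ y} : ℝ) ^ 2
      = ∑ s ∈ V, ∑ s' ∈ V, (#{y ∈ 𝒴 | s ∪ s' ⊆ y} : ℝ) := by
  calc ∑ y ∈ 𝒴, (#{s ∈ V | s ⊆ y} : ℝ) ^ 2
      = ∑ y ∈ 𝒴, ∑ s ∈ V, ∑ s' ∈ V, if s ∪ s' ⊆ y then 1 else 0 := by
        refine sum_congr rfl fun y _ => ?_
        rw [← sum_boole, sq, sum_mul_sum]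
        simp only [union_subset_iff, ite_and, ite_mul, one_mul, zero_mul]
    _ = ∑ s ∈ V, ∑ s' ∈ V, (#{y ∈ 𝒴 | s ∪ s' ⊆ y} : ℝ) := by
        simp only [← sum_boole]
        rw [sum_comm]
        exact sum_congr rfl fun s _ => sum_comm

lemma card_filter_union_subset_le (hkq : k < q) (hqE : q ≤ #E) {s s' : Finset α}
    (hs : s ∈ E.powersetCard k) (hs' : s' ∈ E.powersetCard k) :
    (#{y ∈ E.powersetCard q | s ∪ s' ⊆ y} : ℝ)
      ≤ (#E).choose q * inclusionProb #E q k ^ 2 * (#E / (q - k : ℕ) : ℝ) ^ #(s ∩ s') := by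
  obtain ⟨hsE, hsk⟩ := mem_powersetCard.1 hs
  obtain ⟨hsE', hsk'⟩ := mem_powersetCard.1 hs'
  have hinter : #(s ∩ s') ≤ k := hsk ▸ card_le_card inter_subset_left
  have hunion : #(s ∪ s') = k + (k - #(s ∩ s')) := by
    have := card_union_add_card_inter s s'
    omega
  have hqk_pos : (0 : ℝ) < (q - k : ℕ) := mod_cast Nat.sub_pos_of_lt hkq
  have hE_pos : (0 : ℝ) < #E := mod_cast (Nat.zero_lt_of_lt hkq).trans_le hqE
  rw [card_powersetCard_filter_superset (union_subset hsE hsE'), hunion, mul_assoc]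
  gcongr
  rw [← inv_div, inv_pow, ← div_eq_mul_inv, le_div_iff₀ (by positivity)]
  exact inclusionProb_union_mul_pow_le hqE hinter

lemma IsSpread.sum_card_filter_subset_sq_le (hV : IsSpread V β) (hVE : V ⊆ E.powersetCard k)
    (hkq : k < q) (hqE : q ≤ #E) :
    ∑ y ∈ E.powersetCard q, (#{s ∈ V | s ⊆ y} : ℝ) ^ 2
      ≤ (#E).choose q * inclusionProb #E q k ^ 2 *
        (#V ^ 2 * (1 + #E / (q - k : ℕ) * β) ^ k) := by
  calc ∑ y ∈ E.powersetCard q, (#{s ∈ V | s ⊆ y} : ℝ) ^ 2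
      ≤ ∑ s ∈ V, ∑ s' ∈ V, (#E).choose q * inclusionProb #E q k ^ 2 *
          (1 + #E / (q - k : ℕ) : ℝ) ^ #(s ∩ s') := by
        rw [sum_card_filter_subset_sq]
        refine sum_le_sum fun s hs => sum_le_sum fun s' hs' => ?_
        refine (card_filter_union_subset_le hkq hqE (hVE hs) (hVE hs')).trans ?_
        gcongr
        exact le_add_of_nonneg_left zero_le_one
    _ ≤ ∑ s ∈ V, (#E).choose q * inclusionProb #E q k ^ 2 *
          (#V * (1 + #E / (q - k : ℕ) * β) ^ k) := by
        refine sum_le_sum fun s hs => ?_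
        rw [← mul_sum, ← (mem_powersetCard.1 (hVE hs)).2]
        gcongr
        exact hV.sum_one_add_pow_card_inter_le (by positivity) s
    _ = _ := by rw [sum_const, nsmul_eq_mul]; ring

lemma sq_sum_card_filter_subset_le (𝒴 V : Finset (Finset α)) :
    (∑ y ∈ 𝒴, (#{s ∈ V | s ⊆ y} : ℝ)) ^ 2
      ≤ #{y ∈ 𝒴 | ¬ Avoids V y} * ∑ y ∈ 𝒴, (#{s ∈ V | s ⊆ y} : ℝ) ^ 2 := by
  have restrict : ∑ y ∈ 𝒴 with ¬ Avoids V y, (#{s ∈ V | s ⊆ y} : ℝ)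
      = ∑ y ∈ 𝒴, (#{s ∈ V | s ⊆ y} : ℝ) := by
    refine sum_filter_of_ne fun y _ hy hav => hy ?_
    rw [filter_eq_empty_iff.2 hav, card_empty, Nat.cast_zero]
  rw [← restrict]
  refine sq_sum_le_card_mul_sum_sq.trans ?_
  gcongr
  exact filter_subset _ _

lemma IsSpread.one_le_mul_one_sub_sliceDensity (hV : IsSpread V β) (hne : V.Nonempty)
    (hVE : V ⊆ E.powersetCard k) (hkq : k < q) (hqE : q ≤ #E) :
    1 ≤ (1 + #E / (q - k : ℕ) * β) ^ k * (1 - sliceDensity E (Avoids V) q) := by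
  have hC : (0 : ℝ) < (#E).choose q := mod_cast Nat.choose_pos hqE
  have hr : 0 < inclusionProb #E q k := inclusionProb_pos hkq.le hqE
  have : (0 : ℝ) < #V := mod_cast hne.card_pos
  have cauchy_schwarz := sq_sum_card_filter_subset_le (E.powersetCard q) V
  rw [sum_card_filter_subset hVE, card_filter_not_powersetCard] at cauchy_schwarz
  have hD : 0 ≤ 1 - sliceDensity E (Avoids V) q := sub_nonneg.2 (sliceDensity_le_one q)
  refine le_of_mul_le_mul_left ?_
    (show 0 < (#V * ((#E).choose q * inclusionProb #E q k)) ^ 2 by positivity)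
  calc _ ≤ (#E).choose q * (1 - sliceDensity E (Avoids V) q) *
        ((#E).choose q * inclusionProb #E q k ^ 2 *
          (#V ^ 2 * (1 + #E / (q - k : ℕ) * β) ^ k)) := by
        rw [mul_one]
        refine cauchy_schwarz.trans ?_
        gcongr
        exact hV.sum_card_filter_subset_sq_le hVE hkq hqE
    _ = _ := by ring

lemma IsSpread.sliceDensity_avoids_le (hV : IsSpread V β) (hne : V.Nonempty)
    (hVE : V ⊆ E.powersetCard k) (hβ : 0 ≤ β) (hkq : k < q) (hqE : q ≤ #E) :
    sliceDensity E (Avoids V) q ≤ k * (#E / (q - k : ℕ) * β) := by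
  set x : ℝ := #E / (q - k : ℕ) * β
  have hx : 0 ≤ x := by positivity
  have hD : 0 ≤ 1 - sliceDensity E (Avoids V) q := sub_nonneg.2 (sliceDensity_le_one q)
  have one_le : 1 ≤ Real.exp (k * x) * (1 - sliceDensity E (Avoids V) q) := by
    refine (hV.one_le_mul_one_sub_sliceDensity hne hVE hkq hqE).trans ?_
    rw [Real.exp_nat_mul]
    gcongr
    linarith [Real.add_one_le_exp x]
  have exp_neg_le : Real.exp (-(k * x)) ≤ 1 - sliceDensity E (Avoids V) q := by
    rwa [Real.exp_neg, inv_le_iff_one_le_mul₀' (Real.exp_pos _)]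
  linarith [Real.add_one_le_exp (-(k * x))]

end SecondMoment

lemma div_four_mul_add_le_div_ceil {lam : ℝ} {m l : ℕ} (hlam : 1 ≤ lam) (hm : 1 ≤ m)
    (hl : 8 * ((m : ℝ) ^ 2 * lam) ≤ l) : l / (4 * lam) + m ≤ (l / ⌈lam⌉₊ : ℕ) := by
  have hceil_pos : 0 < ⌈lam⌉₊ := Nat.ceil_pos.2 (by linarith)
  have hceil_le : (⌈lam⌉₊ : ℝ) ≤ 2 * lam := by
    linarith [Nat.ceil_lt_add_one (by linarith : 0 ≤ lam)]
  have hquot : l / (2 * lam) < (l / ⌈lam⌉₊ : ℕ) + 1 :=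
    calc (l / (2 * lam) : ℝ) ≤ l / ⌈lam⌉₊ := by gcongr
      _ < (l / ⌈lam⌉₊ : ℕ) + 1 := by
        rw [div_lt_iff₀ (mod_cast hceil_pos)]
        exact_mod_cast Nat.lt_mul_of_div_lt (Nat.lt_succ_self _) hceil_pos
  have hhalf : (l : ℝ) / (2 * lam) = l / (4 * lam) + l / (4 * lam) := by ring
  have hquarter : 2 * (m : ℝ) ^ 2 ≤ l / (4 * lam) := by
    rw [le_div_iff₀ (by positivity)]; linarith
  have hm' : (1 : ℝ) ≤ m := mod_cast hm
  nlinarith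

lemma IsSpread.sliceDensity_avoids_le_exp_neg {E : Finset α} {V : Finset (Finset α)} {k l m : ℕ}
    {ε lam : ℝ} (hV : IsSpread V (ε * l / (m ^ 2 * lam) * m / #E)) (hne : V.Nonempty)
    (hVE : V ⊆ E.powersetCard k) (hkm : k ≤ m) (hm : 1 ≤ m) (hε : 0 ≤ ε) (hε' : ε ≤ 1 / 12)
    (hlam : 1 ≤ lam) (hl : 8 * ((m : ℝ) ^ 2 * lam) ≤ l) (hlE : l ≤ #E) :
    sliceDensity E (Avoids V) l ≤ Real.exp (-lam) := by
  have : (0 : ℝ) < m := mod_cast hm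
  have : 0 < lam := by linarith
  have hl_pos : (0 : ℝ) < l := lt_of_lt_of_le (by positivity) hl
  have hE_pos : (0 : ℝ) < #E := hl_pos.trans_le (mod_cast hlE)
  set q := l / ⌈lam⌉₊
  have hmq : l / (4 * lam) + m ≤ q := div_four_mul_add_le_div_ceil hlam hm hl
  have hquarter_pos : 0 < l / (4 * lam) := by positivity
  have hkq : k < q := hkm.trans_lt (by exact_mod_cast (by linarith : (m : ℝ) < q))
  have hqk : l / (4 * lam) ≤ (q - k : ℕ) := by
    rw [Nat.cast_sub hkq.le]
    linarith [(Nat.cast_le (α := ℝ)).2 hkm]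
  have block : sliceDensity E (Avoids V) q ≤ Real.exp (-1) :=
    calc sliceDensity E (Avoids V) q
        ≤ k * (#E / (q - k : ℕ) * (ε * l / (m ^ 2 * lam) * m / #E)) :=
          hV.sliceDensity_avoids_le hne hVE (by positivity) hkq ((Nat.div_le_self ..).trans hlE)
      _ ≤ m * (#E / (l / (4 * lam)) * (ε * l / (m ^ 2 * lam) * m / #E)) := by gcongr
      _ = 4 * ε := by field_simp
      _ ≤ 1 / 3 := by linarith
      _ ≤ Real.exp (-1) := by
          rw [Real.exp_neg, ← one_div]
          gcongr
          exact Real.exp_one_lt_three.le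
  exact (sliceDensity_le_exp_neg (avoids_antitone V) block).trans
    (Real.exp_le_exp.2 (neg_le_neg (Nat.le_ceil lam)))

theorem stmt_16_general {E : Finset α} {m l : ℕ} {ε lam : ℝ} (hm : 1 ≤ m) (hε : 0 < ε)
    (hε' : ε ≤ 1 / 12) (hlam : 1 ≤ lam) (hl : (m : ℝ) ^ 2 * lam / ε < l) (hlE : l ≤ #E)
    {U : Finset (Finset α)} (hU : U.Nonempty) (hUE : U ⊆ E.powersetCard m) :
    ∃ g ⊆ E,
      (#g : ℝ) ≤ (Real.log ((#E).choose m) - Real.log #U) /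
        Real.log (ε * l / ((m : ℝ) ^ 2 * lam)) ∧
      ∃ Y ⊆ E.powersetCard l, (#Y : ℝ) ≥ (#E).choose l * (1 - Real.exp (-lam)) ∧
        ∀ y ∈ Y, ∃ s ∈ U, g ⊆ s ∧ s ⊆ g ∪ y := by
  have hm_pos : (0 : ℝ) < m := mod_cast hm
  have hlt : (m : ℝ) ^ 2 * lam < ε * l := by rwa [div_lt_iff₀' hε] at hl
  have hb : 1 < ε * l / ((m : ℝ) ^ 2 * lam) := by rwa [one_lt_div (by positivity)]
  have hl' : 8 * ((m : ℝ) ^ 2 * lam) ≤ l := by nlinarith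
  obtain ⟨g, hgE, hg, hne, hspread⟩ := exists_isSpread_link hb hm hU hUE
  have avoid_le : sliceDensity E (Avoids (link U g)) l ≤ Real.exp (-lam) :=
    hspread.sliceDensity_avoids_le_exp_neg hne (link_subset_powersetCard hUE) (Nat.sub_le m #g)
      hm hε.le hε' hlam hl' hlE
  refine ⟨g, hgE, hg, {y ∈ E.powersetCard l | ¬ Avoids (link U g) y}, filter_subset _ _, ?_,
    fun y hy => exists_mem_of_not_avoids_link (mem_filter.1 hy).2⟩
  rw [ge_iff_le, card_filter_not_powersetCard]
  gcongr

end

theorem stmt_16 :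
    ∃ ε₀ : ℝ, 0 < ε₀ ∧ ε₀ < 1 ∧ ∀ ε : ℝ, 0 < ε → ε ≤ ε₀ →
      ∃ lam₀ : ℝ, 1 ≤ lam₀ ∧ ∃ n₀ : ℕ,
        ∀ n : ℕ, n₀ ≤ n → ∀ m : ℕ, 1 ≤ m →
        ∀ lam : ℝ, lam₀ ≤ lam → (m : ℝ) ^ 2 * lam ≤ ε * n →
        ∀ l : ℕ, (m : ℝ) ^ 2 * lam / ε < l → l ≤ n →
        ∀ U : Finset (Finset ℕ), U.Nonempty → U ⊆ (Finset.Icc 1 n).powersetCard m →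
        ∃ g : Finset ℕ, g ⊆ Finset.Icc 1 n ∧
          (g.card : ℝ) ≤ sparsity n m U / Real.log (ε * l / ((m : ℝ) ^ 2 * lam)) ∧
          ∃ Y : Finset (Finset ℕ), Y ⊆ (Finset.Icc 1 n).powersetCard l ∧
            ((Y.card : ℝ) ≥ (n.choose l : ℝ) * (1 - Real.exp (-lam))) ∧
            ∀ y ∈ Y, ∃ s ∈ U, g ⊆ s ∧ s ⊆ g ∪ y := by
  refine ⟨1 / 12, by norm_num, by norm_num, fun ε hε hε' =>
    ⟨1, le_rfl, 0, fun n _ m hm lam hlam _ l hl hln U hU hUE => ?_⟩⟩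
  simpa [sparsity] using
    stmt_16_general hm hε hε' hlam hl (hln.trans_eq (by simp)) hU hUE
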